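/- arXiv:2006.12547 — 3 statements merged into one kernel-verified Lean document; each statement's English description precedes it below -/
import Mathlib

section
/- If M(n) = 0 for a positive integer n, then there exists a proper divisor d of n² (i.e., d | n², d ≠ n²) such that d·τ(d) ≥ n². -/
/-!
In a tiling by rectangles of common area `d`, additivity of Lebesgue measure gives
`|S| * d = n ^ 2` (`card_mul_area_eq`), so `d ∣ n ^ 2`, and `d ≠ n ^ 2` because `|S| ≥ 2`.
Since the rectangles share their area, the width determines the rectangle up to congruence, so the
width map is an injection of `S` into the divisors of `d`; hence `|S| ≤ τ(d)` and
`n ^ 2 = |S| * d ≤ d * τ(d)`.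
-/

/-- An axis-parallel rectangle with positive integer side lengths,
placed at real coordinates `(x, y)` with width `w` and height `h`. -/
structure Rect where
  x : ℝ
  y : ℝ
  w : ℕ
  h : ℕ
  w_pos : 0 < w
  h_pos : 0 < h

namespace Rect

/-- The (closed) set of points covered by a rectangle. -/
def toSet (r : Rect) : Set (ℝ × ℝ) :=
  Set.Icc r.x (r.x + r.w) ×ˢ Set.Icc r.y (r.y + r.h)

/-- The (open) interior of a rectangle. -/
def interiorSet (r : Rect) : Set (ℝ × ℝ) :=
  Set.Ioo r.x (r.x + r.w) ×ˢ Set.Ioo r.y (r.y + r.h)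

/-- Two rectangles are congruent iff they have the same unordered pair
of side lengths. -/
def Congruent (r s : Rect) : Prop :=
  (r.w = s.w ∧ r.h = s.h) ∨ (r.w = s.h ∧ r.h = s.w)

end Rect

noncomputable instance : DecidableEq Rect := Classical.decEq _

/-- `S` is a finite collection of axis-parallel rectangles with positive
integer side lengths, with pairwise disjoint interiors, whose union is
the `n × n` square. -/
def IsRectTiling (n : ℕ) (S : Finset Rect) : Prop :=
  (⋃ r ∈ S, r.toSet) = Set.Icc (0 : ℝ) (n : ℝ) ×ˢ Set.Icc (0 : ℝ) (n : ℝ) ∧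
  ∀ r ∈ S, ∀ s ∈ S, r ≠ s → r.interiorSet ∩ s.interiorSet = ∅

/-- A Mondrian tiling: a rectangle tiling of the `n × n` square in which
no two rectangles are congruent. -/
def IsMondrianTiling (n : ℕ) (S : Finset Rect) : Prop :=
  IsRectTiling n S ∧ ∀ r ∈ S, ∀ s ∈ S, r ≠ s → ¬ r.Congruent s

/-- `M(n) = 0`: there is a nontrivial Mondrian tiling of the `n × n` square
in which all rectangles have the same area. -/
def MondrianZero (n : ℕ) : Prop :=
  ∃ S : Finset Rect, IsMondrianTiling n S ∧ 2 ≤ S.card ∧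
    ∃ d : ℕ, ∀ r ∈ S, r.w * r.h = d

open MeasureTheory

lemma Rect.volume_toSet (r : Rect) : volume r.toSet = ((r.w * r.h : ℕ) : ENNReal) := by
  rw [Rect.toSet, Measure.volume_eq_prod, Measure.prod_prod, Real.volume_Icc, Real.volume_Icc]
  simp

lemma Rect.volume_interiorSet (r : Rect) :
    volume r.interiorSet = ((r.w * r.h : ℕ) : ENNReal) := by
  rw [Rect.interiorSet, Measure.volume_eq_prod, Measure.prod_prod, Real.volume_Ioo,
    Real.volume_Ioo]
  simp

lemma Rect.interiorSet_subset_toSet (r : Rect) : r.interiorSet ⊆ r.toSet :=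
  Set.prod_mono Set.Ioo_subset_Icc_self Set.Ioo_subset_Icc_self

/-- The areas of the tiles add up to the area of the square: the closed rectangles cover it, which
gives `≥`, and the disjoint open rectangles are contained in it, which gives `≤`. -/
lemma card_mul_area_eq {n d : ℕ} {S : Finset Rect} (hS : IsRectTiling n S)
    (hd : ∀ r ∈ S, r.w * r.h = d) : S.card * d = n ^ 2 := by
  obtain ⟨hcover, hdisj⟩ := hS
  have hsq : volume (⋃ r ∈ S, r.toSet) = ((n ^ 2 : ℕ) : ENNReal) := by
    rw [hcover, Measure.volume_eq_prod, Measure.prod_prod, Real.volume_Icc]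
    simp [sq]
  have hclosed : ∑ r ∈ S, volume r.toSet = ((S.card * d : ℕ) : ENNReal) := by
    rw [Finset.sum_congr rfl fun r hr => by rw [r.volume_toSet, hd r hr]]
    simp
  have hopen : volume (⋃ r ∈ S, r.interiorSet) = ((S.card * d : ℕ) : ENNReal) := by
    rw [measure_biUnion_finset
      (fun r hr s hs hrs => Set.disjoint_iff_inter_eq_empty.2 (hdisj r hr s hs hrs))
      (fun r _ => measurableSet_Ioo.prod measurableSet_Ioo),
      Finset.sum_congr rfl fun r hr => by rw [r.volume_interiorSet, hd r hr]]
    simp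
  apply le_antisymm
  · have : volume (⋃ r ∈ S, r.interiorSet) ≤ volume (⋃ r ∈ S, r.toSet) :=
      measure_mono (Set.iUnion₂_mono fun r _ => r.interiorSet_subset_toSet)
    rw [hsq, hopen] at this
    exact_mod_cast this
  · have : volume (⋃ r ∈ S, r.toSet) ≤ ∑ r ∈ S, volume r.toSet :=
      measure_biUnion_finset_le S _
    rw [hsq, hclosed] at this
    exact_mod_cast this

/-- Pairwise non-congruent rectangles of the same area `d` have distinct widths, all dividing `d`. -/
lemma card_le_card_divisors {d : ℕ} {S : Finset Rect} (hd0 : d ≠ 0)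
    (hcong : ∀ r ∈ S, ∀ s ∈ S, r ≠ s → ¬ r.Congruent s) (hd : ∀ r ∈ S, r.w * r.h = d) :
    S.card ≤ (Nat.divisors d).card := by
  refine Finset.card_le_card_of_injOn Rect.w
    (fun r hr => Nat.mem_divisors.2 ⟨⟨r.h, (hd r hr).symm⟩, hd0⟩) ?_
  intro r hr s hs hrs
  by_contra hne
  refine hcong r hr s hs hne (Or.inl ⟨hrs, Nat.eq_of_mul_eq_mul_left r.w_pos ?_⟩)
  rw [hd r hr, hrs, hd s hs]

/-- If `M(n) = 0` for a positive integer `n`, there is a proper divisor `d`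
of `n²` with `d·τ(d) ≥ n²`. -/
theorem stmt1 (n : ℕ) (hn : 0 < n) (h : MondrianZero n) :
    ∃ d : ℕ, d ∣ n ^ 2 ∧ d ≠ n ^ 2 ∧ n ^ 2 ≤ d * (Nat.divisors d).card := by
  obtain ⟨S, ⟨htile, hcong⟩, hcard, d, hd⟩ := h
  have harea := card_mul_area_eq htile hd
  have hn2 : 0 < n ^ 2 := by positivity
  have hd0 : d ≠ 0 := by
    rintro rfl
    omega
  refine ⟨d, ⟨S.card, by rw [← harea, mul_comm]⟩, ?_, ?_⟩
  · have : 0 < d := Nat.pos_of_ne_zero hd0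
    nlinarith
  · rw [← harea, mul_comm]
    exact Nat.mul_le_mul_left d (card_le_card_divisors hd0 hcong hd)
end

section
/- If a positive integer n satisfies d·τ(d) < n² for every proper divisor d of n² (i.e., every d with d | n² and d ≠ n²), then M(n) ≠ 0. -/
open MeasureTheory in
/-- The total area of the tiles is the area of the square. The union of the open tiles gives `≤`,
by disjointness; the union of the closed tiles gives `≥`, by subadditivity. -/
lemma tiling_area {n : ℕ} {S : Finset Rect} (hS : IsRectTiling n S) :
    ∑ r ∈ S, r.w * r.h = n ^ 2 := by
  obtain ⟨hU, hd⟩ := hS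
  have hclosed (r : Rect) : volume r.toSet = ((r.w * r.h : ℕ) : ENNReal) := by
    rw [Rect.toSet, Measure.volume_eq_prod, Measure.prod_prod]
    simp
  have hopen (r : Rect) : volume r.interiorSet = ((r.w * r.h : ℕ) : ENNReal) := by
    rw [Rect.interiorSet, Measure.volume_eq_prod, Measure.prod_prod]
    simp
  have hsquare : volume (Set.Icc (0 : ℝ) (n : ℝ) ×ˢ Set.Icc (0 : ℝ) (n : ℝ)) =
      ((n ^ 2 : ℕ) : ENNReal) := by
    rw [Measure.volume_eq_prod, Measure.prod_prod]
    simp [sq]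
  apply le_antisymm
  · have hunion : volume (⋃ r ∈ S, r.interiorSet) = ∑ r ∈ S, volume r.interiorSet := by
      refine measure_biUnion_finset ?_ fun r _ => ?_
      · intro r hr s hs hrs
        exact Set.disjoint_iff_inter_eq_empty.mpr (hd r hr s hs hrs)
      · exact measurableSet_Ioo.prod measurableSet_Ioo
    have hsub : (⋃ r ∈ S, r.interiorSet) ⊆ ⋃ r ∈ S, r.toSet :=
      Set.iUnion₂_mono fun r _ => Set.prod_mono Set.Ioo_subset_Icc_self Set.Ioo_subset_Icc_self
    have hle := measure_mono (μ := volume) hsub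
    rw [hU, hsquare, hunion, Finset.sum_congr rfl fun r _ => hopen r] at hle
    exact_mod_cast hle
  · have hle := measure_biUnion_finset_le (μ := volume) S Rect.toSet
    rw [hU, hsquare, Finset.sum_congr rfl fun r _ => hclosed r] at hle
    exact_mod_cast hle

/-- If `d·τ(d) < n²` for every proper divisor `d` of `n²`, then `M(n) ≠ 0`. -/
theorem stmt4 (n : ℕ) (hn : 0 < n)
    (h : ∀ d : ℕ, d ∣ n ^ 2 → d ≠ n ^ 2 → d * (Nat.divisors d).card < n ^ 2) :
    ¬ MondrianZero n := by
  rintro ⟨S, ⟨hT, hncong⟩, hcard, d, hd⟩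
  have harea : S.card * d = n ^ 2 := by
    rw [← tiling_area hT, Finset.sum_congr rfl hd, Finset.sum_const, smul_eq_mul]
  have hn2 : 0 < n ^ 2 := by positivity
  have hdpos : 0 < d := Nat.pos_of_ne_zero fun h0 => by simp [h0] at harea; omega
  have hproper : d ≠ n ^ 2 := by
    intro heq
    nlinarith
  have hcard_le : S.card ≤ (Nat.divisors d).card := by
    refine Finset.card_le_card_of_injOn Rect.w (fun r hr => ?_) fun r hr s hs hw => ?_
    · exact Nat.mem_divisors.mpr ⟨⟨r.h, (hd r hr).symm⟩, hdpos.ne'⟩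
    · by_contra hne
      refine hncong r hr s hs hne (Or.inl ⟨hw, ?_⟩)
      apply Nat.eq_of_mul_eq_mul_left r.w_pos
      rw [hd r hr, hw, hd s hs]
  have hlt := h d ⟨S.card, by rw [mul_comm, harea]⟩ hproper
  nlinarith
end

section
/- If |{n ≤ x : M(n) = 0}| = o(x) as x → ∞ (i.e., (1/x)·|{n ≤ x : M(n) = 0}| tends to 0), then M(n) ≠ 0 for every positive integer n; equivalently, if M(n) = 0 for some n, then the set {n : M(n) = 0} has positive lower density, since it contains all multiples of n. -/
/-- The image of a rectangle under the homothety of ratio `k > 0` centred at the origin. -/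
noncomputable def Rect.scale (k : ℕ) (hk : 0 < k) (r : Rect) : Rect where
  x := k * r.x
  y := k * r.y
  w := k * r.w
  h := k * r.h
  w_pos := Nat.mul_pos hk r.w_pos
  h_pos := Nat.mul_pos hk r.h_pos

lemma Rect.mem_toSet_scale (k : ℕ) (hk : 0 < k) (r : Rect) (p : ℝ × ℝ) :
    p ∈ (r.scale k hk).toSet ↔ (p.1 / k, p.2 / k) ∈ r.toSet := by
  have hk' : (0 : ℝ) < k := by exact_mod_cast hk
  simp only [Rect.toSet, Rect.scale, Set.mem_prod, Set.mem_Icc, Nat.cast_mul, ← mul_add,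
    le_div_iff₀' hk', div_le_iff₀' hk']

lemma Rect.mem_interiorSet_scale (k : ℕ) (hk : 0 < k) (r : Rect) (p : ℝ × ℝ) :
    p ∈ (r.scale k hk).interiorSet ↔ (p.1 / k, p.2 / k) ∈ r.interiorSet := by
  have hk' : (0 : ℝ) < k := by exact_mod_cast hk
  simp only [Rect.interiorSet, Rect.scale, Set.mem_prod, Set.mem_Ioo, Nat.cast_mul, ← mul_add,
    lt_div_iff₀' hk', div_lt_iff₀' hk']

lemma Rect.congruent_of_scale {k : ℕ} (hk : 0 < k) {r s : Rect}
    (h : (r.scale k hk).Congruent (s.scale k hk)) : r.Congruent s := by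
  simpa [Rect.Congruent, Rect.scale, hk.ne'] using h

lemma Rect.scale_injective (k : ℕ) (hk : 0 < k) : Function.Injective (Rect.scale k hk) := by
  intro r s h
  have hk' : (k : ℝ) ≠ 0 := by exact_mod_cast hk.ne'
  cases r
  cases s
  simpa [Rect.scale, hk', hk.ne'] using h

lemma MondrianZero.mul_left {n : ℕ} (h : MondrianZero n) {k : ℕ} (hk : 0 < k) :
    MondrianZero (k * n) := by
  obtain ⟨S, ⟨⟨hU, hI⟩, hC⟩, hcard, d, hd⟩ := h
  have hk' : (0 : ℝ) < k := by exact_mod_cast hk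
  refine ⟨S.image (Rect.scale k hk), ⟨⟨?_, ?_⟩, ?_⟩, ?_, k * k * d, ?_⟩
  · ext p
    have hp := Set.ext_iff.mp hU (p.1 / k, p.2 / k)
    simp only [Set.mem_iUnion, exists_prop, Set.mem_prod, Set.mem_Icc, le_div_iff₀' hk',
      div_le_iff₀' hk', mul_zero] at hp
    simpa [Rect.mem_toSet_scale, -Set.Icc_prod_Icc] using hp
  · simp only [Finset.forall_mem_image]
    intro r hr s hs hne
    have hrs := hI r hr s hs (fun e => hne (by rw [e]))
    ext p
    have hp := Set.ext_iff.mp hrs (p.1 / k, p.2 / k)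
    simpa only [Set.mem_inter_iff, Rect.mem_interiorSet_scale, Set.mem_empty_iff_false] using hp
  · simp only [Finset.forall_mem_image]
    intro r hr s hs hne hcong
    exact hC r hr s hs (fun e => hne (by rw [e])) (Rect.congruent_of_scale hk hcong)
  · rwa [Finset.card_image_of_injective _ (Rect.scale_injective k hk)]
  · simp only [Finset.forall_mem_image]
    intro r hr
    rw [← hd r hr]
    simp only [Rect.scale]
    ring

/-- Up to `n * K` there are at least the `K` zeros `n, 2n, …, Kn` of `M`. -/
lemma le_card_mondrianZero {n : ℕ} (hn : 0 < n) (h : MondrianZero n) (K : ℕ) :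
    K ≤ Nat.card {m : ℕ | 0 < m ∧ (m : ℝ) ≤ (n : ℝ) * K ∧ MondrianZero m} := by
  have hfin : {m : ℕ | 0 < m ∧ (m : ℝ) ≤ (n : ℝ) * K ∧ MondrianZero m}.Finite := by
    refine (Set.finite_Iic (n * K)).subset ?_
    rintro m ⟨-, hm, -⟩
    exact_mod_cast hm
  have hsub : (((Finset.Icc 1 K).image (· * n) : Finset ℕ) : Set ℕ) ⊆
      {m : ℕ | 0 < m ∧ (m : ℝ) ≤ (n : ℝ) * K ∧ MondrianZero m} := by
    intro m hm
    simp only [Finset.coe_image, Set.mem_image, Finset.mem_coe, Finset.mem_Icc] at hm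
    obtain ⟨k, ⟨hk1, hkK⟩, rfl⟩ := hm
    refine ⟨Nat.mul_pos hk1 hn, ?_, h.mul_left hk1⟩
    rw [mul_comm k n]
    exact_mod_cast Nat.mul_le_mul_left n hkK
  have hle := Set.ncard_le_ncard hsub hfin
  rwa [Set.ncard_coe_finset,
    Finset.card_image_of_injective _ (mul_left_injective₀ hn.ne'), Nat.card_Icc,
    Nat.add_sub_cancel] at hle

/-- If `|{n ≤ x : M(n) = 0}| = o(x)` as `x → ∞`, then `M(n) ≠ 0` for every
positive integer `n`. -/
theorem stmt9
    (h : Filter.Tendsto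
      (fun x : ℝ =>
        (Nat.card {n : ℕ | 0 < n ∧ (n : ℝ) ≤ x ∧ MondrianZero n} : ℝ) / x)
      Filter.atTop (nhds 0)) :
    ∀ n : ℕ, 0 < n → ¬ MondrianZero n := by
  intro n hn hM
  have hn' : (0 : ℝ) < n := by exact_mod_cast hn
  -- Restrict the limit to the sequence `x = n * K`.
  have hseq : Filter.Tendsto (fun K : ℕ => (n : ℝ) * K) Filter.atTop Filter.atTop :=
    tendsto_natCast_atTop_atTop.const_mul_atTop hn'
  have hlow : (1 : ℝ) / n ≤ 0 := by
    refine ge_of_tendsto (h.comp hseq) ?_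
    filter_upwards [Filter.eventually_gt_atTop 0] with K hK
    have hK' : (0 : ℝ) < K := by exact_mod_cast hK
    have hc : (K : ℝ) ≤
        (Nat.card {m : ℕ | 0 < m ∧ (m : ℝ) ≤ (n : ℝ) * K ∧ MondrianZero m} : ℝ) := by
      exact_mod_cast le_card_mondrianZero hn hM K
    rw [Function.comp_apply, div_le_div_iff₀ hn' (mul_pos hn' hK')]
    nlinarith
  exact absurd hlow (not_le.mpr (one_div_pos.mpr hn'))
end
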